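/- For every real u with |u| < 1 and every real y with -1 ≤ y ≤ 1, the generating-function identity ∑_{l=0}^∞ u^l · P_l(y) = 1/√(u² - 2yu + 1) holds, the series being convergent. -/

import Mathlib

open Filter Topology

/-- The Legendre polynomials `P l` on `ℝ`, i.e. the orthogonal polynomials on `[-1,1]`
normalized by `P l 1 = 1`, defined via the Bonnet recurrence
`P 0 y = 1`, `P 1 y = y`, `(n+2) • P (n+2) y = (2n+3) y P (n+1) y - (n+1) P n y`. -/
noncomputable def legendreP : ℕ → ℝ → ℝ
  | 0, _ => 1
  | 1, y => y
  | (n + 2), y =>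
      ((2 * (n : ℝ) + 3) * y * legendreP (n + 1) y - ((n : ℝ) + 1) * legendreP n y) / ((n : ℝ) + 2)

/-! Let `L = ∑ Pₙ(y) Xⁿ` as a formal power series and `q = X² - 2yX + 1`. Together with `P₀ = 1` and
`P₁ = y`, Bonnet's recurrence says exactly `q L' = (y - X) L`. Hence `q L²` has derivative
`q' L² + 2 q L L' = 0`, and so `q L² = 1`.

Since `|Pₙ(y)| ≤ 1` for `|y| ≤ 1`, the series converges absolutely for `|u| < 1`, and evaluating
the formal identity there shows that its sum is `±1 / √(q(u))`. The sum is continuous in `u` and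
equals `1` at `u = 0`, so the sign is `+` throughout. -/

section PowerSeriesEvaluation

open Polynomial PowerSeries
open Finset.HasAntidiagonal (antidiagonal mem_antidiagonal)

theorem hasSum_pow_mul_coeff_mul {R : Type*} [NormedCommRing R] [NormedSpace ℝ R]
    [FiniteDimensional ℝ R] {f g : R⟦X⟧} {x a b : R}
    (hf : HasSum (fun n ↦ x ^ n * f.coeff n) a) (hg : HasSum (fun n ↦ x ^ n * g.coeff n) b) :
    HasSum (fun n ↦ x ^ n * (f * g).coeff n) (a * b) := by
  have : CompleteSpace R := FiniteDimensional.complete ℝ R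
  have hf_norm := hf.summable.norm
  have hg_norm := hg.summable.norm
  have cauchy_term (n : ℕ) : x ^ n * (f * g).coeff n =
      ∑ p ∈ antidiagonal n, x ^ p.1 * f.coeff p.1 * (x ^ p.2 * g.coeff p.2) := by
    rw [PowerSeries.coeff_mul, Finset.mul_sum]
    refine Finset.sum_congr rfl fun p hp ↦ ?_
    rw [← mem_antidiagonal.1 hp]
    ring
  simp only [cauchy_term]
  rw [← hf.tsum_eq, ← hg.tsum_eq,
    tsum_mul_tsum_eq_tsum_sum_antidiagonal_of_summable_norm hf_norm hg_norm]
  exact (summable_norm_sum_mul_antidiagonal_of_summable_norm hf_norm hg_norm).of_norm.hasSum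

theorem hasSum_pow_mul_coeff_polynomial {R : Type*} [CommSemiring R] [TopologicalSpace R]
    (p : R[X]) (x : R) :
    HasSum (fun n ↦ x ^ n * (p : R⟦X⟧).coeff n) (p.eval x) := by
  have h : HasSum (fun n ↦ x ^ n * (p : R⟦X⟧).coeff n) (∑ n ∈ p.support, x ^ n * p.coeff n) := by
    simp only [Polynomial.coeff_coe]
    exact hasSum_sum_of_ne_finset_zero fun n hn ↦ by rw [notMem_support_iff.1 hn, mul_zero]
  simpa only [eval_eq_sum, Polynomial.sum, mul_comm] using h

end PowerSeriesEvaluation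

theorem tsum_zero_pow_mul {R : Type*} [Semiring R] [TopologicalSpace R] (c : ℕ → R) :
    ∑' n, 0 ^ n * c n = c 0 := by
  rw [tsum_eq_single 0 fun n hn ↦ by rw [zero_pow hn, zero_mul], pow_zero, one_mul]

section BoundedCoefficients

variable {R : Type*} [NormedRing R] [NormOneClass R] {c : ℕ → R} {C : ℝ}

theorem norm_pow_mul_le_of_norm_le {x : R} {r : ℝ} (hx : ‖x‖ ≤ r) (hc : ∀ n, ‖c n‖ ≤ C) (n : ℕ) :
    ‖x ^ n * c n‖ ≤ r ^ n * C :=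
  have hr : 0 ≤ r := (norm_nonneg x).trans hx
  calc
    ‖x ^ n * c n‖ ≤ ‖x‖ ^ n * ‖c n‖ := norm_mul_le_of_le (norm_pow_le x n) le_rfl
    _ ≤ r ^ n * C := by gcongr; exact hc n

variable [CompleteSpace R]

theorem summable_pow_mul_of_norm_le {x : R} (hx : ‖x‖ < 1) (hc : ∀ n, ‖c n‖ ≤ C) :
    Summable fun n ↦ x ^ n * c n :=
  .of_norm_bounded ((summable_geometric_of_lt_one (norm_nonneg x) hx).mul_right C)
    (norm_pow_mul_le_of_norm_le le_rfl hc)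

theorem continuousOn_tsum_pow_mul_of_norm_le (hc : ∀ n, ‖c n‖ ≤ C) :
    ContinuousOn (fun x : R ↦ ∑' n, x ^ n * c n) (Metric.ball 0 1) := by
  intro x hx
  obtain ⟨r, hxr, hr⟩ := exists_between (mem_ball_zero_iff.1 hx)
  have hr₀ : 0 ≤ r := (norm_nonneg x).trans hxr.le
  have continuousOn_ball_r : ContinuousOn (fun x : R ↦ ∑' n, x ^ n * c n) (Metric.ball 0 r) :=
    continuousOn_tsum (fun n ↦ by fun_prop) ((summable_geometric_of_lt_one hr₀ hr).mul_right C)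
      fun n z hz ↦ norm_pow_mul_le_of_norm_le (mem_ball_zero_iff.1 hz).le hc n
  exact (continuousOn_ball_r.continuousAt
    (Metric.isOpen_ball.mem_nhds (mem_ball_zero_iff.2 hxr))).continuousWithinAt

end BoundedCoefficients

section LegendreBound

theorem legendreP_bonnet (n : ℕ) (y : ℝ) :
    (n + 2) * legendreP (n + 2) y =
      (2 * n + 3) * y * legendreP (n + 1) y - (n + 1) * legendreP n y := by
  rw [legendreP]
  field_simp

theorem legendreP_eq_pow_of_sq_eq_one {y : ℝ} (hy : y ^ 2 = 1) (n : ℕ) : legendreP n y = y ^ n := by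
  induction n using Nat.twoStepInduction with
  | zero => simp only [legendreP, pow_zero]
  | one => simp only [legendreP, pow_one]
  | more n ih ih_succ =>
    have hn : (n + 2 : ℝ) ≠ 0 := by positivity
    apply mul_left_cancel₀ hn
    rw [legendreP_bonnet, ih, ih_succ]
    linear_combination (n + 1) * y ^ n * hy

/-- The quadratic form `a² - 2yab + b²` at two consecutive Legendre values. It decreases in `n`
and dominates `(1 - y²) Pₙ(y)²`, which bounds the Legendre polynomials on `[-1, 1]`. Up to the
factor `1 - y²` it is Sonin's function `Pₙ₊₁² + (1 - y²) (P'ₙ₊₁ / (n + 1))²`. -/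
noncomputable def legendreEnergy (n : ℕ) (y : ℝ) : ℝ :=
  legendreP n y ^ 2 - 2 * y * legendreP n y * legendreP (n + 1) y + legendreP (n + 1) y ^ 2

theorem legendreEnergy_zero (y : ℝ) : legendreEnergy 0 y = 1 - y ^ 2 := by
  simp only [legendreEnergy, legendreP]
  ring

theorem legendreEnergy_succ (n : ℕ) (y : ℝ) :
    legendreEnergy (n + 1) y = legendreEnergy n y -
      (2 * n + 3) * ((legendreP n y - y * legendreP (n + 1) y) / (n + 2)) ^ 2 := by
  have bonnet : legendreP (n + 2) y = 2 * y * legendreP (n + 1) y - legendreP n y +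
      (legendreP n y - y * legendreP (n + 1) y) / (n + 2) := by
    field_simp
    linear_combination legendreP_bonnet n y
  rw [legendreEnergy, legendreEnergy, bonnet]
  field_simp
  ring

theorem antitone_legendreEnergy (y : ℝ) : Antitone (legendreEnergy · y) :=
  antitone_nat_of_succ_le fun n ↦ by
    rw [legendreEnergy_succ]
    exact sub_le_self _ (by positivity)

theorem mul_legendreP_sq_le_legendreEnergy (n : ℕ) (y : ℝ) :
    (1 - y ^ 2) * legendreP n y ^ 2 ≤ legendreEnergy n y := by
  rw [legendreEnergy]
  linear_combination sq_nonneg (legendreP (n + 1) y - y * legendreP n y)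

theorem abs_legendreP_le_one {y : ℝ} (hy : |y| ≤ 1) (n : ℕ) : |legendreP n y| ≤ 1 := by
  rcases ((sq_le_one_iff_abs_le_one y).2 hy).lt_or_eq with hlt | heq
  · have energy_bound : (1 - y ^ 2) * legendreP n y ^ 2 ≤ (1 - y ^ 2) * 1 :=
      calc
        (1 - y ^ 2) * legendreP n y ^ 2 ≤ legendreEnergy n y :=
          mul_legendreP_sq_le_legendreEnergy n y
        _ ≤ legendreEnergy 0 y := antitone_legendreEnergy y (Nat.zero_le n)
        _ = (1 - y ^ 2) * 1 := by rw [legendreEnergy_zero, mul_one]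
    exact (sq_le_one_iff_abs_le_one _).1 (le_of_mul_le_mul_left energy_bound (sub_pos.2 hlt))
  · rw [legendreP_eq_pow_of_sq_eq_one heq, abs_pow]
    exact pow_le_one₀ (abs_nonneg y) hy

end LegendreBound

section LegendreSeries

open PowerSeries

/-- The formal generating function `∑ Pₙ(y) Xⁿ` of the Legendre polynomials at `y`. -/
noncomputable def legendreSeries (y : ℝ) : ℝ⟦X⟧ := PowerSeries.mk (legendreP · y)

@[simp]
theorem coeff_legendreSeries (n : ℕ) (y : ℝ) : (legendreSeries y).coeff n = legendreP n y :=
  coeff_mk n _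

theorem quadratic_mul_derivative_legendreSeries (y : ℝ) :
    (X ^ 2 - C (2 * y) * X + 1) * d⁄dX ℝ (legendreSeries y) = (C y - X) * legendreSeries y := by
  ext n
  simp only [add_mul, sub_mul, one_mul, sq, mul_assoc, map_add, map_sub, coeff_C_mul]
  rcases n with _ | _ | n
  · simp [coeff_derivative, legendreP]
  · simp only [zero_add, coeff_succ_X_mul, coeff_zero_X_mul, coeff_derivative,
      coeff_legendreSeries]
    push_cast
    linear_combination legendreP_bonnet 0 y
  · have bonnet := legendreP_bonnet (n + 1) y
    push_cast at bonnet
    simp only [coeff_succ_X_mul, coeff_derivative, coeff_legendreSeries]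
    push_cast
    linear_combination bonnet

theorem quadratic_mul_legendreSeries_sq (y : ℝ) :
    (X ^ 2 - C (2 * y) * X + 1) * legendreSeries y ^ 2 = 1 := by
  apply derivative.ext
  · have leibniz : d⁄dX ℝ ((X ^ 2 - C (2 * y) * X + 1) * legendreSeries y ^ 2) =
        (2 * X - 2 * C y) * legendreSeries y ^ 2 +
          2 * legendreSeries y * ((X ^ 2 - C (2 * y) * X + 1) * d⁄dX ℝ (legendreSeries y)) := by
      have derivative_quadratic : d⁄dX ℝ (X ^ 2 - C (2 * y) * X + 1) = 2 * X - 2 * C y := by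
        simp [two_mul]
      rw [Derivation.leibniz, derivative_pow, derivative_quadratic, smul_eq_mul, smul_eq_mul]
      norm_num
      ring
    rw [leibniz, quadratic_mul_derivative_legendreSeries, derivative_one]
    ring
  · simp [← coeff_zero_eq_constantCoeff_apply, sq, coeff_mul, legendreP]

end LegendreSeries

section GeneratingFunction

variable {u y : ℝ}

theorem sq_sub_two_mul_add_one_pos (hu : |u| < 1) (hy : |y| ≤ 1) : 0 < u ^ 2 - 2 * y * u + 1 := by
  have hyu : y * u ≤ |u| :=
    calc
      y * u ≤ |y| * |u| := (le_abs_self _).trans (abs_mul y u).le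
      _ ≤ |u| := mul_le_of_le_one_left (abs_nonneg u) hy
  calc
    0 < (1 - |u|) ^ 2 := pow_pos (sub_pos.2 hu) 2
    _ = u ^ 2 - 2 * |u| + 1 := by rw [← sq_abs u]; ring
    _ ≤ u ^ 2 - 2 * y * u + 1 := by linarith

theorem summable_pow_mul_legendreP (hu : |u| < 1) (hy : |y| ≤ 1) :
    Summable fun n ↦ u ^ n * legendreP n y :=
  summable_pow_mul_of_norm_le hu (abs_legendreP_le_one hy)

theorem quadratic_mul_tsum_legendreP_sq (hu : |u| < 1) (hy : |y| ≤ 1) :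
    (u ^ 2 - 2 * y * u + 1) * (∑' n, u ^ n * legendreP n y) ^ 2 = 1 := by
  have hL : HasSum (fun n ↦ u ^ n * (legendreSeries y).coeff n) (∑' n, u ^ n * legendreP n y) := by
    simpa only [coeff_legendreSeries] using (summable_pow_mul_legendreP hu hy).hasSum
  have hq := hasSum_pow_mul_coeff_polynomial (.X ^ 2 - .C (2 * y) * .X + 1) u
  have h_one := hasSum_pow_mul_coeff_polynomial 1 u
  have h_prod := hasSum_pow_mul_coeff_mul hq (hasSum_pow_mul_coeff_mul hL hL)
  push_cast at h_one h_prod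
  rw [← sq, quadratic_mul_legendreSeries_sq] at h_prod
  simpa [sq] using h_prod.unique h_one

theorem tsum_pow_mul_legendreP (hu : |u| < 1) (hy : |y| ≤ 1) :
    ∑' n, u ^ n * legendreP n y = 1 / √(u ^ 2 - 2 * y * u + 1) := by
  have quadratic_pos_on_ball {x : ℝ} (hx : x ∈ Metric.ball 0 1) : 0 < x ^ 2 - 2 * y * x + 1 :=
    sq_sub_two_mul_add_one_pos (mem_ball_zero_iff.1 hx) hy
  have sqrt_ne_zero {x : ℝ} (hx : x ∈ Metric.ball 0 1) : √(x ^ 2 - 2 * y * x + 1) ≠ 0 :=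
    (Real.sqrt_pos.2 (quadratic_pos_on_ball hx)).ne'
  have continuousOn_inv_sqrt :
      ContinuousOn (fun x ↦ 1 / √(x ^ 2 - 2 * y * x + 1)) (Metric.ball 0 1) :=
    continuousOn_const.div (by fun_prop) fun _ ↦ sqrt_ne_zero
  have sq_eq_sq_on_ball : Set.EqOn ((fun x ↦ ∑' n, x ^ n * legendreP n y) ^ 2)
      ((fun x ↦ 1 / √(x ^ 2 - 2 * y * x + 1)) ^ 2) (Metric.ball 0 1) := by
    intro x hx
    simp only [Pi.pow_apply, div_pow, one_pow, Real.sq_sqrt (quadratic_pos_on_ball hx).le]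
    exact eq_one_div_of_mul_eq_one_right
      (quadratic_mul_tsum_legendreP_sq (mem_ball_zero_iff.1 hx) hy)
  have eq_at_zero : ∑' n, (0 : ℝ) ^ n * legendreP n y = 1 / √(0 ^ 2 - 2 * y * 0 + 1) := by
    simp [tsum_zero_pow_mul (legendreP · y), legendreP]
  exact (convex_ball 0 1).isPreconnected.eq_of_sq_eq
    (continuousOn_tsum_pow_mul_of_norm_le (abs_legendreP_le_one hy)) continuousOn_inv_sqrt
    sq_eq_sq_on_ball (fun hx ↦ one_div_ne_zero (sqrt_ne_zero hx))
    (Metric.mem_ball_self one_pos) eq_at_zero (mem_ball_zero_iff.2 hu)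

end GeneratingFunction

/-- The Legendre generating-function identity:
for `|u| < 1` and `y ∈ [-1,1]`, `∑ u^l P l y = 1/√(u² - 2yu + 1)`. -/
theorem legendre_generating_function (u y : ℝ) (hu : |u| < 1) (hy₁ : -1 ≤ y) (hy₂ : y ≤ 1) :
    HasSum (fun l : ℕ => u ^ l * legendreP l y)
      (1 / Real.sqrt (u ^ 2 - 2 * y * u + 1)) := by
  have hy : |y| ≤ 1 := abs_le.2 ⟨hy₁, hy₂⟩
  rw [← tsum_pow_mul_legendreP hu hy]
  exact (summable_pow_mul_legendreP hu hy).hasSum
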